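/- arXiv:1903.10646 — 7 statements merged into one kernel-verified Lean document; each statement's English description precedes it below -/
import Mathlib

section
/- Suppose τ, σ > 0 and (x̂, ŷ) = PD_{τ,σ}(x̄, ȳ, x̃, ỹ) for given points x̄, x̃ ∈ 𝕏 and ȳ, ỹ ∈ 𝕐. Then for every (x, y) ∈ 𝕏 × 𝕐 one has L(x̂, y) − L(x, ŷ) ≤ (1/τ)(D_𝕏(x, x̄) − D_𝕏(x, x̂) − D_𝕏(x̂, x̄)) + (L_f/2)‖x̂ − x̄‖² + (1/σ)(D_𝕐(y, ȳ) − D_𝕐(y, ŷ) − D_𝕐(ŷ, ȳ)) + ⟨K(x − x̂), ỹ − ŷ⟩ − ⟨K(x̃ − x̂), y − ŷ⟩. -/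
theorem aux_opt {E : Type*} [NormedAddCommGroup E] [NormedSpace ℝ E] (C : Set E) (p φ : E → ℝ)
    (hp : ConvexOn ℝ C p) (a : E) (ha : a ∈ C) (φ' : E →L[ℝ] ℝ) (hφ : HasFDerivAt φ φ' a)
    (hmin : ∀ u ∈ C, p a + φ a ≤ p u + φ u) (x : E) (hx : x ∈ C) :
    p a ≤ p x + φ' (x - a) := by
  have hd : HasDerivAt (fun t : ℝ => φ (a + t • (x - a))) (φ' (x - a)) 0 := by
    have h1 : HasDerivAt (fun t : ℝ => a + t • (x - a)) (x - a) 0 := by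
      simpa using ((hasDerivAt_id (0:ℝ)).smul_const (x - a)).const_add a
    have h2 : HasFDerivAt φ φ' (a + (0:ℝ) • (x - a)) := by simpa using hφ
    exact h2.comp_hasDerivAt 0 h1
  have ht := hasDerivWithinAt_iff_tendsto_slope.1 (hd.hasDerivWithinAt (s := Set.Ioi 0))
  have hset : Set.Ioi (0:ℝ) \ {0} = Set.Ioi 0 := by simp
  rw [hset] at ht
  have key : p a - p x ≤ φ' (x - a) := by
    refine ge_of_tendsto ht ?_
    filter_upwards [Ioo_mem_nhdsGT (zero_lt_one' ℝ)] with t ht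
    obtain ⟨h0, h1⟩ := ht
    have hc := hp.2 ha hx (show (0:ℝ) ≤ 1 - t by linarith) h0.le (show 1 - t + t = 1 by ring)
    have hm := hp.1 ha hx (show (0:ℝ) ≤ 1 - t by linarith) h0.le (show 1 - t + t = 1 by ring)
    have he : (1 - t) • a + t • x = a + t • (x - a) := by module
    rw [he] at hc hm
    have := hmin _ hm
    simp only [smul_eq_mul] at hc
    rw [slope_def_field, le_div_iff₀ (by linarith)]
    simp only [zero_smul, add_zero]
    nlinarith
  linarith

theorem aux_descent {E : Type*} [NormedAddCommGroup E] [NormedSpace ℝ E] (Lf : ℝ)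
    (f : E → ℝ) (f' : E → E →L[ℝ] ℝ) (hf : ∀ x, HasFDerivAt f (f' x) x)
    (hL : ∀ x x' : E, ‖f' x - f' x'‖ ≤ Lf * ‖x - x'‖) (a b : E) :
    f b ≤ f a + f' a (b - a) + Lf / 2 * ‖b - a‖ ^ 2 := by
  set d := b - a with hdd
  have hr : ∀ t : ℝ, HasDerivAt
      (fun t : ℝ => f (a + t • d) - t * f' a d - Lf / 2 * ‖d‖ ^ 2 * t ^ 2)
      (f' (a + t • d) d - f' a d - Lf * ‖d‖ ^ 2 * t) t := by
    intro t
    have h1 : HasDerivAt (fun t : ℝ => a + t • d) d t := by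
      simpa using ((hasDerivAt_id t).smul_const d).const_add a
    have h2 := (hf (a + t • d)).comp_hasDerivAt t h1
    have h3 := (hasDerivAt_id t).mul_const (f' a d)
    have h4 := ((hasDerivAt_id t).pow 2).const_mul (Lf / 2 * ‖d‖ ^ 2)
    refine HasDerivAt.congr_deriv (f' := f' (a + t • d) d - 1 * f' a d -
      Lf / 2 * ‖d‖ ^ 2 * ((2 : ℕ) * t ^ (2 - 1) * 1)) ((h2.sub h3).sub h4) ?_
    norm_num
    ring
  have hanti : AntitoneOn
      (fun t : ℝ => f (a + t • d) - t * f' a d - Lf / 2 * ‖d‖ ^ 2 * t ^ 2) (Set.Icc 0 1) := by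
    refine antitoneOn_of_deriv_nonpos (convex_Icc 0 1)
      (fun t _ => (hr t).continuousAt.continuousWithinAt)
      (fun t _ => (hr t).differentiableAt.differentiableWithinAt) ?_
    intro t ht
    rw [interior_Icc] at ht
    rw [(hr t).deriv]
    have h1 : (f' (a + t • d) - f' a) d ≤ ‖f' (a + t • d) - f' a‖ * ‖d‖ :=
      (le_abs_self _).trans ((f' (a + t • d) - f' a).le_opNorm d)
    have h2 := hL (a + t • d) a
    rw [add_sub_cancel_left, norm_smul, Real.norm_of_nonneg ht.1.le] at h2
    have h3 := mul_le_mul_of_nonneg_right h2 (norm_nonneg d)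
    rw [ContinuousLinearMap.sub_apply] at h1
    nlinarith
  have := hanti (Set.left_mem_Icc.2 zero_le_one) (Set.right_mem_Icc.2 zero_le_one) zero_le_one
  have hb : a + d = b := by rw [hdd]; abel
  simp [hb] at this
  linarith


/-- Lemma 1 of Chambolle–Pock (2016): the fundamental descent inequality for one
generic primal-dual step `(x̂, ŷ) = PD_{τ,σ}(x̄, ȳ, x̃, ỹ)`.  The extended-real-valued
proper l.s.c. convex functions `g, h*` are encoded by a real-valued function together
with its (convex) domain; the minimization defining the step, and the conclusion, are
taken over those domains (outside them the original extended-real statement is vacuous). -/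
theorem stmt_0
    {X Y : Type*} [NormedAddCommGroup X] [NormedSpace ℝ X] [FiniteDimensional ℝ X]
    [NormedAddCommGroup Y] [NormedSpace ℝ Y] [FiniteDimensional ℝ Y]
    -- bounded linear operator into the continuous dual of Y
    (K : X →L[ℝ] Y →L[ℝ] ℝ)
    -- f convex differentiable with L_f-Lipschitz gradient
    (Lf : ℝ) (hLf : 0 ≤ Lf)
    (f : X → ℝ) (f' : X → X →L[ℝ] ℝ)
    (hfconv : ConvexOn ℝ Set.univ f)
    (hfderiv : ∀ x, HasFDerivAt f (f' x) x)
    (hfLip : ∀ x x' : X, ‖f' x - f' x'‖ ≤ Lf * ‖x - x'‖)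
    -- g proper l.s.c. convex with domain domg
    (domg : Set X) (hdomgne : domg.Nonempty) (hdomgconv : Convex ℝ domg)
    (g : X → ℝ) (hgconv : ConvexOn ℝ domg g) (hglsc : LowerSemicontinuousOn g domg)
    -- h* proper l.s.c. convex with domain domh
    (domh : Set Y) (hdomhne : domh.Nonempty) (hdomhconv : Convex ℝ domh)
    (hstar : Y → ℝ) (hhconv : ConvexOn ℝ domh hstar)
    (hhlsc : LowerSemicontinuousOn hstar domh)
    -- distance-generating functions: differentiable, 1-strongly convex
    (ψX : X → ℝ) (ψX' : X → X →L[ℝ] ℝ) (hψXd : ∀ x, HasFDerivAt ψX (ψX' x) x)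
    (hψXsc : ∀ (v v' : X) (l : ℝ), 0 ≤ l → l ≤ 1 →
      ψX (l • v + (1 - l) • v') ≤
        l * ψX v + (1 - l) * ψX v' - 1 / 2 * l * (1 - l) * ‖v - v'‖ ^ 2)
    (ψY : Y → ℝ) (ψY' : Y → Y →L[ℝ] ℝ) (hψYd : ∀ y, HasFDerivAt ψY (ψY' y) y)
    (hψYsc : ∀ (v v' : Y) (l : ℝ), 0 ≤ l → l ≤ 1 →
      ψY (l • v + (1 - l) • v') ≤
        l * ψY v + (1 - l) * ψY v' - 1 / 2 * l * (1 - l) * ‖v - v'‖ ^ 2)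
    -- Bregman divergences
    (DX : X → X → ℝ) (hDX : ∀ x' x, DX x' x = ψX x' - ψX x - ψX' x (x' - x))
    (DY : Y → Y → ℝ) (hDY : ∀ y' y, DY y' y = ψY y' - ψY y - ψY' y (y' - y))
    -- the saddle function
    (L : X → Y → ℝ) (hLdef : ∀ x y, L x y = K x y + f x + g x - hstar y)
    -- stepsizes
    (τ σ : ℝ) (hτ : 0 < τ) (hσ : 0 < σ)
    -- the primal-dual step (x̂, ŷ) = PD_{τ,σ}(x̄, ȳ, x̃, ỹ)
    (xbar xtil xhat : X) (ybar ytil yhat : Y)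
    (hxhat : xhat ∈ domg ∧ ∀ u ∈ domg,
      f xbar + f' xbar (xhat - xbar) + g xhat + K xhat ytil + 1 / τ * DX xhat xbar ≤
        f xbar + f' xbar (u - xbar) + g u + K u ytil + 1 / τ * DX u xbar)
    (hyhat : yhat ∈ domh ∧ ∀ v ∈ domh,
      hstar yhat - K xtil yhat + 1 / σ * DY yhat ybar ≤
        hstar v - K xtil v + 1 / σ * DY v ybar) :
    ∀ x ∈ domg, ∀ y ∈ domh,
      L xhat y - L x yhat ≤
        1 / τ * (DX x xbar - DX x xhat - DX xhat xbar) + Lf / 2 * ‖xhat - xbar‖ ^ 2 +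
          1 / σ * (DY y ybar - DY y yhat - DY yhat ybar) +
          K (x - xhat) (ytil - yhat) - K (xtil - xhat) (y - yhat) := by
  intro x hx y hy
  have hf1 := aux_descent Lf f f' hfderiv hfLip xbar xhat
  have hf2 := aux_opt Set.univ f (fun u => - f u) hfconv xbar trivial (-f' xbar)
    (hfderiv xbar).neg (fun u _ => by simp) x trivial
  have hX := aux_opt domg g
    (fun u => f' xbar u + K.flip ytil u + 1 / τ * (ψX u - ψX' xbar u)) hgconv xhat hxhat.1
    (f' xbar + K.flip ytil + (1 / τ) • (ψX' xhat - ψX' xbar))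
    (((f' xbar).hasFDerivAt.add (K.flip ytil).hasFDerivAt).add
      (((hψXd xhat).sub (ψX' xbar).hasFDerivAt).const_mul (1 / τ)))
    (fun u hu => by
      have := hxhat.2 u hu
      simp only [hDX, map_sub, ContinuousLinearMap.flip_apply] at this ⊢
      linarith) x hx
  have hY := aux_opt domh hstar
    (fun v => - K xtil v + 1 / σ * (ψY v - ψY' ybar v)) hhconv yhat hyhat.1
    (- K xtil + (1 / σ) • (ψY' yhat - ψY' ybar))
    ((K xtil).hasFDerivAt.neg.add
      (((hψYd yhat).sub (ψY' ybar).hasFDerivAt).const_mul (1 / σ)))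
    (fun v hv => by
      have := hyhat.2 v hv
      simp only [hDY, map_sub] at this ⊢
      linarith) y hy
  simp only [hLdef, hDX, hDY, map_sub, ContinuousLinearMap.flip_apply,
    ContinuousLinearMap.add_apply, ContinuousLinearMap.sub_apply, ContinuousLinearMap.neg_apply,
    ContinuousLinearMap.smul_apply, smul_eq_mul] at *
  linarith
end

section
/- (Algebraic lemma for IPDA weights, part 1.) Let α, r, β, γ be real numbers with 0 < α < 1/3, r > (1 + α)²/(1 − 3α), and 0 ≤ β ≤ γ ≤ α with γ > 0. Define b = min{ (1 − β)/γ , (r(1 − β) − (1 + β))/(γ(1 + 2r + γ)) } and b* = min{ 2 , (r(1 − α) − (1 + α))/(2αr + α(1 + α)) }. Then b ≥ b* and b* > 1. -/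
theorem stmt_4 (α r β γ : ℝ)
    (hα0 : 0 < α) (hα13 : α < 1/3)
    (hr : (1 + α) ^ 2 / (1 - 3 * α) < r)
    (hβ0 : 0 ≤ β) (hβγ : β ≤ γ) (hγα : γ ≤ α) (hγ0 : 0 < γ) :
    min 2 ((r * (1 - α) - (1 + α)) / (2 * α * r + α * (1 + α))) ≤
      min ((1 - β) / γ) ((r * (1 - β) - (1 + β)) / (γ * (1 + 2 * r + γ))) ∧
    1 < min 2 ((r * (1 - α) - (1 + α)) / (2 * α * r + α * (1 + α))) := by
  have h3 : 0 < 1 - 3 * α := by linarith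
  have hr' : (1 + α) ^ 2 < r * (1 - 3 * α) := (div_lt_iff₀ h3).1 hr
  have hr0 : 0 < r := lt_trans (by positivity) hr
  have hN : 2 * α * r + α * (1 + α) < r * (1 - α) - (1 + α) := by nlinarith
  have hD : 0 < 2 * α * r + α * (1 + α) := by positivity
  refine ⟨le_min ?_ ?_, lt_min (by norm_num) ((one_lt_div hD).2 hN)⟩
  · refine (min_le_left _ _).trans ?_
    rw [le_div_iff₀ hγ0]
    linarith
  · refine (min_le_right _ _).trans ?_
    have hβα : 0 ≤ α - β := by linarith
    have h1 : r * (1 - α) - (1 + α) ≤ r * (1 - β) - (1 + β) := by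
      nlinarith [mul_nonneg hr0.le hβα]
    have h2 : γ * (1 + 2 * r + γ) ≤ 2 * α * r + α * (1 + α) := by
      have h4 : γ * (1 + 2 * r + γ) ≤ α * (1 + 2 * r + α) := by gcongr
      linarith
    exact div_le_div₀ (by linarith) h1 (by positivity) h2
end

section
/- (Algebraic lemma for IPDA weights, part 2.) Let α, r, β, γ, c be real numbers with 0 < α < 1/3, r > (1 + α)²/(1 − 3α), 0 ≤ β ≤ γ ≤ α, γ > 0, and suppose 1 ≤ c ≤ min{ (1 − β)/γ , (r(1 − β) − (1 + β))/(γ(1 + 2r + γ)) }. Then: (i) 1 − β − cγ ≥ 0; and (ii) 1 − β − 2cγ > 0 and (1 + β + c(γ + γ²))/(1 − β − 2cγ) ≤ r. -/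
theorem stmt_5 (α r β γ c : ℝ)
    (hα0 : 0 < α) (hα13 : α < 1/3)
    (hr : (1 + α) ^ 2 / (1 - 3 * α) < r)
    (hβ0 : 0 ≤ β) (hβγ : β ≤ γ) (hγα : γ ≤ α) (hγ0 : 0 < γ)
    (hc1 : 1 ≤ c)
    (hc2 : c ≤ min ((1 - β) / γ) ((r * (1 - β) - (1 + β)) / (γ * (1 + 2 * r + γ)))) :
    0 ≤ 1 - β - c * γ ∧
    0 < 1 - β - 2 * c * γ ∧
    (1 + β + c * (γ + γ ^ 2)) / (1 - β - 2 * c * γ) ≤ r := by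
  have hr0 : 0 < r := lt_of_le_of_lt (div_nonneg (sq_nonneg _) (by linarith)) hr
  have h1 := (le_div_iff₀ hγ0).1 (le_trans hc2 (min_le_left _ _))
  have h2 := (le_div_iff₀ (by positivity)).1 (le_trans hc2 (min_le_right _ _))
  have h3 : 1 + β + c * (γ + γ ^ 2) ≤ r * (1 - β - 2 * c * γ) := by nlinarith
  have hc0 : 0 < c := by linarith
  have h4 : 0 < 1 + β + c * (γ + γ ^ 2) := by positivity
  have h5 : 0 < 1 - β - 2 * c * γ := pos_of_mul_pos_right (lt_of_lt_of_le h4 h3) hr0.le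
  exact ⟨by linarith, h5, (div_le_iff₀ h5).2 h3⟩
end

section
/- (Weighted-average guarantee for Mirror Prox, general stepsizes.) Let τ_t > 0 for t = 1, …, T. Starting from z¹ ∈ 𝒵, for each t = 1, …, T let z̃^t be the minimizer over w ∈ 𝒵 of ⟨τ_t F(z^t), w⟩ + D(w, z^t), and let z^{t+1} be the minimizer over w ∈ 𝒵 of ⟨τ_t F(z̃^t), w⟩ + D(w, z^t). Define δ_t = τ_t⟨F(z̃^t), z̃^t − z^{t+1}⟩ − D(z^{t+1}, z^t). Let w_1, …, w_T be positive and nondecreasing, S_T = Σ_{t=1}^T w_t τ_t, and z̄^T = (x̄^T, ȳ^T) = (1/S_T) Σ_{t=1}^T w_t τ_t z̃^t. Then for every T ≥ 1 and every (x, y) ∈ 𝒳 × 𝒴: φ(x̄^T, y) − φ(x, ȳ^T) ≤ (w_T Ω + Σ_{t=1}^T w_t δ_t)/S_T. -/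
lemma aux_dir {E : Type*} [NormedAddCommGroup E] [NormedSpace ℝ E] (f : E → ℝ) (f' : E →L[ℝ] ℝ)
    (a b : E) (c : ℝ) (h : HasFDerivAt f f' a)
    (hc : ∀ l : ℝ, 0 < l → l < 1 → f (a + l • (b - a)) - f a ≤ l * c) : f' (b - a) ≤ c := by
  have h1 : HasDerivAt (fun l : ℝ => f (a + l • (b - a))) (f' (b - a)) 0 := by
    have h2 : HasDerivAt (fun l : ℝ => a + l • (b - a)) (b - a) 0 := by
      simpa using ((hasDerivAt_id (0 : ℝ)).smul_const (b - a)).const_add a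
    have h3 : HasFDerivAt f f' (a + (0 : ℝ) • (b - a)) := by simpa using h
    exact h3.comp_hasDerivAt (0 : ℝ) h2
  have h4 := h1.hasDerivWithinAt (s := Set.Ioi 0)
  rw [hasDerivWithinAt_iff_tendsto_slope' (by simp)] at h4
  refine le_of_tendsto h4 ?_
  filter_upwards [Ioo_mem_nhdsGT (zero_lt_one' ℝ)] with l hl
  have := hc l hl.1 hl.2
  rw [slope_def_field, div_le_iff₀ (by linarith [hl.1])]
  simp only [zero_smul, add_zero, sub_zero]
  linarith

lemma aux_convex {E : Type*} [NormedAddCommGroup E] [NormedSpace ℝ E] (S : Set E) (f : E → ℝ)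
    (f' : E →L[ℝ] ℝ) (a b : E) (h : HasFDerivAt f f' a) (hf : ConvexOn ℝ S f)
    (ha : a ∈ S) (hb : b ∈ S) : f' (b - a) ≤ f b - f a := by
  refine aux_dir f f' a b _ h ?_
  intro l h0 h1
  have := hf.2 ha hb (by linarith : 0 ≤ 1 - l) h0.le (by ring)
  have e : (1 - l) • a + l • b = a + l • (b - a) := by module
  rw [e] at this
  simp only [smul_eq_mul] at this
  linarith

lemma aux_min {E : Type*} [NormedAddCommGroup E] [NormedSpace ℝ E] (S : Set E) (hS : Convex ℝ S)
    (f : E → ℝ)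
    (f' : E →L[ℝ] ℝ) (a b : E) (h : HasFDerivAt f f' a)
    (ha : a ∈ S) (hb : b ∈ S) (hm : ∀ p ∈ S, f a ≤ f p) : 0 ≤ f' (b - a) := by
  have := aux_dir (fun x => - f x) (-f') a b 0 h.neg ?_
  · simpa using this
  intro l h0 h1
  have e : (1 - l) • a + l • b = a + l • (b - a) := by module
  have := hm _ (hS ha hb (by linarith : 0 ≤ 1 - l) h0.le (by ring))
  rw [e] at this
  linarith


/-- Weighted-average guarantee for Mirror Prox with general stepsizes:
`φ(x̄^T, y) − φ(x, ȳ^T) ≤ (w_T Ω + Σ_t w_t δ_t)/S_T`. -/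
theorem stmt_7
    {X Y : Type*} [NormedAddCommGroup X] [NormedSpace ℝ X] [FiniteDimensional ℝ X]
    [NormedAddCommGroup Y] [NormedSpace ℝ Y] [FiniteDimensional ℝ Y]
    -- nonempty closed convex sets 𝒳 ⊆ X, 𝒴 ⊆ Y; 𝒵 = 𝒳 × 𝒴
    (SX : Set X) (SY : Set Y)
    (hSXne : SX.Nonempty) (hSXcl : IsClosed SX) (hSXconv : Convex ℝ SX)
    (hSYne : SY.Nonempty) (hSYcl : IsClosed SY) (hSYconv : Convex ℝ SY)
    -- the convex-concave cost φ and its gradient vector field F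
    (φ : X → Y → ℝ)
    (hφconv : ∀ y ∈ SY, ConvexOn ℝ SX (fun x => φ x y))
    (hφconc : ∀ x ∈ SX, ConcaveOn ℝ SY (fun y => φ x y))
    (φx' : X × Y → X →L[ℝ] ℝ) (φy' : X × Y → Y →L[ℝ] ℝ)
    (hφx' : ∀ z : X × Y, HasFDerivAt (fun x => φ x z.2) (φx' z) z.1)
    (hφy' : ∀ z : X × Y, HasFDerivAt (fun y => φ z.1 y) (φy' z) z.2)
    (F : X × Y → (X × Y) →L[ℝ] ℝ)
    (hF : ∀ z w : X × Y, F z w = φx' z w.1 - φy' z w.2)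
    -- distance-generating function on Z = X × Y: differentiable, 1-strongly convex
    (ψ : X × Y → ℝ) (ψ' : X × Y → (X × Y) →L[ℝ] ℝ)
    (hψd : ∀ z, HasFDerivAt ψ (ψ' z) z)
    (hψsc : ∀ (v v' : X × Y) (l : ℝ), 0 ≤ l → l ≤ 1 →
      ψ (l • v + (1 - l) • v') ≤
        l * ψ v + (1 - l) * ψ v' - 1 / 2 * l * (1 - l) * ‖v - v'‖ ^ 2)
    (D : X × Y → X × Y → ℝ) (hD : ∀ p z, D p z = ψ p - ψ z - ψ' z (p - z))
    (Ω : ℝ) (hΩ : ∀ z ∈ SX ×ˢ SY, ∀ z' ∈ SX ×ˢ SY, D z z' ≤ Ω)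
    -- stepsizes
    (τs : ℕ → ℝ) (hτspos : ∀ t : ℕ, 1 ≤ t → 0 < τs t)
    -- the Mirror Prox iterates
    (z : ℕ → X × Y) (ztil : ℕ → X × Y)
    (hz1 : z 1 ∈ SX ×ˢ SY)
    (hztil : ∀ t : ℕ, 1 ≤ t → ztil t ∈ SX ×ˢ SY ∧ ∀ p ∈ SX ×ˢ SY,
      τs t * F (z t) (ztil t) + D (ztil t) (z t) ≤ τs t * F (z t) p + D p (z t))
    (hznext : ∀ t : ℕ, 1 ≤ t → z (t + 1) ∈ SX ×ˢ SY ∧ ∀ p ∈ SX ×ˢ SY,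
      τs t * F (ztil t) (z (t + 1)) + D (z (t + 1)) (z t) ≤
        τs t * F (ztil t) p + D p (z t))
    (δ : ℕ → ℝ)
    (hδ : ∀ t : ℕ, 1 ≤ t →
      δ t = τs t * F (ztil t) (ztil t - z (t + 1)) - D (z (t + 1)) (z t))
    -- positive nondecreasing weights
    (w : ℕ → ℝ) (hwpos : ∀ t : ℕ, 1 ≤ t → 0 < w t)
    (hwmono : ∀ t : ℕ, 1 ≤ t → w t ≤ w (t + 1)) :
    ∀ T : ℕ, 1 ≤ T → ∀ x ∈ SX, ∀ y ∈ SY,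
      φ ((1 / ∑ t ∈ Finset.Icc 1 T, w t * τs t) •
            ∑ t ∈ Finset.Icc 1 T, (w t * τs t) • ztil t).1 y -
          φ x ((1 / ∑ t ∈ Finset.Icc 1 T, w t * τs t) •
            ∑ t ∈ Finset.Icc 1 T, (w t * τs t) • ztil t).2 ≤
        (w T * Ω + ∑ t ∈ Finset.Icc 1 T, w t * δ t) /
          (∑ t ∈ Finset.Icc 1 T, w t * τs t) := by
  intro T hT x hx y hy
  have hS : Convex ℝ (SX ×ˢ SY) := hSXconv.prod hSYconv
  have hp : ((x, y) : X × Y) ∈ SX ×ˢ SY := ⟨hx, hy⟩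
  have hzm : ∀ t : ℕ, 1 ≤ t → z t ∈ SX ×ˢ SY := by
    intro t ht
    obtain ⟨k, rfl⟩ := Nat.exists_eq_add_of_le' ht
    rcases k with _ | k
    · exact hz1
    · exact (hznext (k + 1) (by omega)).1
  have hDnn : ∀ p q, 0 ≤ D p q := by
    intro p q
    have hc : ConvexOn ℝ Set.univ ψ := by
      refine ⟨convex_univ, ?_⟩
      intro a _ b _ s r hs hr hsr
      have h1 := hψsc a b s hs (by linarith)
      have e : 1 - s = r := by linarith
      rw [e] at h1
      simp only [smul_eq_mul]
      have : 0 ≤ 1 / 2 * s * r * ‖a - b‖ ^ 2 := by positivity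
      linarith
    have := aux_convex Set.univ ψ (ψ' q) q p (hψd q) hc trivial trivial
    rw [hD]
    linarith
  have hstep : ∀ t : ℕ, 1 ≤ t → τs t * F (ztil t) (ztil t - (x, y)) ≤
      δ t + D (x, y) (z t) - D (x, y) (z (t + 1)) := by
    intro t ht
    obtain ⟨hu, hmin⟩ := hznext t ht
    have hd : HasFDerivAt (fun p => τs t * F (ztil t) p + D p (z t))
        (τs t • F (ztil t) + (ψ' (z (t + 1)) - ψ' (z t))) (z (t + 1)) := by
      have e : (fun p => τs t * F (ztil t) p + D p (z t)) =
          fun p => τs t * F (ztil t) p + (ψ p - ψ (z t) - ψ' (z t) (p - z t)) := by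
        funext p
        rw [hD]
      rw [e]
      have h1 := ((F (ztil t)).hasFDerivAt (x := z (t + 1))).const_mul (τs t)
      have h2 := (hψd (z (t + 1))).sub_const (ψ (z t))
      have h3 : HasFDerivAt (fun p => ψ' (z t) (p - z t)) (ψ' (z t)) (z (t + 1)) := by
        simp only [map_sub]
        exact ((ψ' (z t)).hasFDerivAt).sub_const _
      exact h1.add (h2.sub h3)
    have := aux_min _ hS _ _ _ (x, y) hd hu hp hmin
    rw [hδ t ht, hD, hD, hD]
    simp only [ContinuousLinearMap.add_apply, ContinuousLinearMap.sub_apply,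
      ContinuousLinearMap.smul_apply, smul_eq_mul, map_sub] at this ⊢
    linarith
  have hsum : ∀ n : ℕ, 1 ≤ n → ∑ t ∈ Finset.Icc 1 n, (w t * τs t) * F (ztil t) (ztil t - (x, y)) ≤
      w n * Ω - w n * D (x, y) (z (n + 1)) + ∑ t ∈ Finset.Icc 1 n, w t * δ t := by
    intro n hn
    induction n, hn using Nat.le_induction with
    | base =>
      simp only [Finset.Icc_self, Finset.sum_singleton]
      have h1 := mul_le_mul_of_nonneg_left (hstep 1 le_rfl) (hwpos 1 le_rfl).le
      have h2 := mul_le_mul_of_nonneg_left (hΩ _ hp _ hz1) (hwpos 1 le_rfl).le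
      linarith
    | succ n hn ih =>
      rw [Finset.sum_Icc_succ_top (by omega), Finset.sum_Icc_succ_top (by omega)]
      have h1 := mul_le_mul_of_nonneg_left (hstep (n + 1) (by omega)) (hwpos (n + 1) (by omega)).le
      have h2 := mul_nonneg (sub_nonneg.2 (hwmono n hn))
        (sub_nonneg.2 (hΩ _ hp _ (hzm (n + 1) (by omega))))
      linarith
  have hgap : ∀ t : ℕ, 1 ≤ t → φ (ztil t).1 y - φ x (ztil t).2 ≤
      F (ztil t) (ztil t - (x, y)) := by
    intro t ht
    obtain ⟨h1, h2⟩ := (hztil t ht).1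
    have a1 := aux_convex SX _ _ _ x (hφx' (ztil t)) (hφconv _ h2) h1 hx
    have a2 := aux_convex SY _ _ _ y (hφy' (ztil t)).neg (hφconc _ h1).neg h2 hy
    rw [hF]
    simp only [ContinuousLinearMap.neg_apply, Pi.neg_apply, map_sub, Prod.fst_sub,
      Prod.snd_sub] at a1 a2 ⊢
    linarith
  have hwt : ∀ t ∈ Finset.Icc 1 T, 0 < w t * τs t := fun t ht =>
    mul_pos (hwpos t (Finset.mem_Icc.1 ht).1) (hτspos t (Finset.mem_Icc.1 ht).1)
  have hSpos : 0 < ∑ t ∈ Finset.Icc 1 T, w t * τs t :=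
    Finset.sum_pos hwt ⟨1, Finset.mem_Icc.2 ⟨le_rfl, hT⟩⟩
  have j1 := (hφconv y hy).map_centerMass_le (t := Finset.Icc 1 T) (w := fun t => w t * τs t)
    (p := fun t => (ztil t).1) (fun t ht => (hwt t ht).le) hSpos
    (fun t ht => (hztil t (Finset.mem_Icc.1 ht).1).1.1)
  have j2 := (hφconc x hx).le_map_centerMass (t := Finset.Icc 1 T) (w := fun t => w t * τs t)
    (p := fun t => (ztil t).2) (fun t ht => (hwt t ht).le) hSpos
    (fun t ht => (hztil t (Finset.mem_Icc.1 ht).1).1.2)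
  simp only [Finset.centerMass, Function.comp_def, smul_eq_mul] at j1 j2
  simp only [Prod.smul_fst, Prod.smul_snd, Prod.fst_sum, Prod.snd_sum, one_div]
  refine (sub_le_sub j1 j2).trans ?_
  rw [← mul_sub, ← Finset.sum_sub_distrib, inv_mul_eq_div]
  refine div_le_div_of_nonneg_right ?_ hSpos.le
  have h5 := hsum T hT
  have h6 := mul_nonneg (hwpos T hT).le (hDnn (x, y) (z (T + 1)))
  have h7 : ∑ t ∈ Finset.Icc 1 T, (w t * τs t * φ (ztil t).1 y - w t * τs t * φ x (ztil t).2) ≤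
      ∑ t ∈ Finset.Icc 1 T, (w t * τs t) * F (ztil t) (ztil t - (x, y)) := by
    refine Finset.sum_le_sum fun t ht => ?_
    rw [← mul_sub]
    exact mul_le_mul_of_nonneg_left (hgap t (Finset.mem_Icc.1 ht).1) (hwt t ht).le
  linarith
end

section
/- (Weighted-average guarantee for Mirror Prox, constant stepsizes.) Suppose in addition that F is L-Lipschitz continuous on 𝒵 (with L > 0), i.e. ‖F(z) − F(z')‖_* ≤ L‖z − z'‖ for all z, z' ∈ 𝒵, where ‖·‖_* is the dual norm. Fix q ≥ 0 and take τ_t = 1/L and w_t = t^q for all t. Starting from z¹ ∈ 𝒵, for each t let z̃^t be the minimizer over w ∈ 𝒵 of ⟨τ_t F(z^t), w⟩ + D(w, z^t), let z^{t+1} be the minimizer over w ∈ 𝒵 of ⟨τ_t F(z̃^t), w⟩ + D(w, z^t), and set δ_t = τ_t⟨F(z̃^t), z̃^t − z^{t+1}⟩ − D(z^{t+1}, z^t). Then δ_t ≤ 0 for every t, and with S_T = Σ_{t=1}^T w_t τ_t and z̄^T = (x̄^T, ȳ^T) = (1/S_T) Σ_{t=1}^T w_t τ_t z̃^t, for every T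 ≥ 1 and every (x, y) ∈ 𝒳 × 𝒴: φ(x̄^T, y) − φ(x, ȳ^T) ≤ (q + 1)LΩ/T. -/
theorem aux_grad {E : Type*} [NormedAddCommGroup E] [NormedSpace ℝ E] (f : E → ℝ) (f' : E →L[ℝ] ℝ)
    (c : ℝ) (a b : E) (hf : HasFDerivAt f f' a)
    (h : ∀ l : ℝ, 0 ≤ l → l ≤ 1 →
      f (l • b + (1 - l) • a) ≤ l * f b + (1 - l) * f a - c * l * (1 - l)) :
    f a + f' (b - a) + c ≤ f b := by
  have hl : HasDerivAt (fun l : ℝ => l • b + (1 - l) • a) (b - a) 0 := by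
    have h1 := ((hasDerivAt_id (0:ℝ)).smul_const b).add
      (((hasDerivAt_const (0:ℝ) (1:ℝ)).sub (hasDerivAt_id (0:ℝ))).smul_const a)
    refine HasDerivAt.congr_deriv (f' := (1:ℝ) • b + (0 - 1 : ℝ) • a) h1 ?_
    rw [zero_sub, neg_smul, one_smul, one_smul, sub_eq_add_neg]
  have hf2 : HasFDerivAt f f' ((fun l : ℝ => l • b + (1 - l) • a) 0) := by simpa using hf
  have h3 := hf2.comp_hasDerivAt (0:ℝ) hl
  have h4 : HasDerivAt (fun l : ℝ => l * f b + (1 - l) * f a - c * l * (1 - l))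
      (f b - f a - c) 0 := by
    have i := hasDerivAt_id (0:ℝ)
    have j := (hasDerivAt_const (0:ℝ) (1:ℝ)).sub i
    have h1 := ((i.mul_const (f b)).add (j.mul_const (f a))).sub ((i.const_mul c).mul j)
    refine HasDerivAt.congr_deriv h1 ?_
    simp
    ring
  have h5 := (h4.sub h3).hasFDerivAt.hasFDerivWithinAt (s := Set.Icc (0:ℝ) 1)
  have hmin : IsLocalMinOn ((fun l : ℝ => l * f b + (1 - l) * f a - c * l * (1 - l)) -
      (f ∘ fun l : ℝ => l • b + (1 - l) • a)) (Set.Icc (0:ℝ) 1) 0 := by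
    apply IsMinOn.localize
    intro l hl
    have := h l hl.1 hl.2
    simp
    linarith
  have h6 := hmin.hasFDerivWithinAt_nonneg h5
    (y := 1 - 0) (sub_mem_posTangentConeAt_of_segment_subset
      ((convex_Icc (0:ℝ) 1).segment_subset (by simp) (by simp)))
  simp at h6
  have h7 : f' (b - a) = f' b - f' a := map_sub _ _ _
  linarith

theorem aux_min_s8 {E : Type*} [NormedAddCommGroup E] [NormedSpace ℝ E] (S : Set E) (hS : Convex ℝ S)
    (ψ : E → ℝ) (ψ' : E → E →L[ℝ] ℝ) (hψd : ∀ z, HasFDerivAt ψ (ψ' z) z)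
    (D : E → E → ℝ) (hD : ∀ p z, D p z = ψ p - ψ z - ψ' z (p - z))
    (τ : ℝ) (g : E →L[ℝ] ℝ) (u c : E) (hu : u ∈ S)
    (hmin : ∀ p ∈ S, τ * g u + D u c ≤ τ * g p + D p c) (p : E) (hp : p ∈ S) :
    τ * g (u - p) ≤ D p c - D p u - D u c := by
  have h1 : HasFDerivAt (fun p => τ * g p + (ψ p - ψ' c p)) (τ • g + (ψ' u - ψ' c)) u :=
    (g.hasFDerivAt.const_mul τ).add ((hψd u).sub (ψ' c).hasFDerivAt)
  have hm : IsLocalMinOn (fun p => τ * g p + (ψ p - ψ' c p)) S u := by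
    apply IsMinOn.localize
    intro v hv
    have := hmin v hv
    simp only [hD, map_sub] at this
    simp only [Set.mem_setOf_eq]
    linarith
  have h6 := hm.hasFDerivWithinAt_nonneg h1.hasFDerivWithinAt
    (y := p - u) (sub_mem_posTangentConeAt_of_segment_subset (hS.segment_subset hu hp))
  simp only [ContinuousLinearMap.add_apply, ContinuousLinearMap.sub_apply,
    ContinuousLinearMap.smul_apply, smul_eq_mul, map_sub] at h6
  simp only [hD, map_sub]
  linarith

theorem aux_sum (q : ℝ) (hq : 0 ≤ q) (w : ℕ → ℝ) (hw : ∀ t : ℕ, 1 ≤ t → w t = (t : ℝ) ^ q)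
    (T : ℕ) : (T : ℝ) ^ q * T ≤ (q + 1) * ∑ t ∈ Finset.Icc 1 T, w t := by
  induction T with
  | zero => simp
  | succ n ih =>
    rw [Finset.sum_Icc_succ_top (by omega), hw (n+1) (by omega), mul_add]
    push_cast
    have hn : (0:ℝ) < (n:ℝ) + 1 := by positivity
    have hb := one_add_mul_self_le_rpow_one_add (s := -1 / ((n:ℝ)+1)) (p := q + 1)
      (by rw [le_div_iff₀ hn]; linarith [(Nat.cast_nonneg n : (0:ℝ) ≤ n)]) (by linarith)
    have e : 1 + -1 / ((n:ℝ)+1) = n / (n+1) := by field_simp; ring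
    rw [e, Real.div_rpow (by positivity) hn.le, le_div_iff₀ (by positivity),
      Real.rpow_add_one' (by positivity) (by linarith),
      Real.rpow_add_one' (by positivity) (by linarith)] at hb
    have e2 : (1 + (q+1) * (-1 / ((n:ℝ)+1))) * (((n:ℝ)+1)^q * ((n:ℝ)+1))
        = ((n:ℝ)+1)^q * ((n:ℝ)+1) - (q+1) * ((n:ℝ)+1)^q := by field_simp; ring
    rw [e2] at hb
    linarith


/-- Weighted-average guarantee for Mirror Prox with constant stepsizes `τ_t = 1/L` and
weights `w_t = t^q`: each `δ_t ≤ 0` and the gap of the weighted averages is at most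
`(q+1)LΩ/T`. -/
theorem stmt_8
    {X Y : Type*} [NormedAddCommGroup X] [NormedSpace ℝ X] [FiniteDimensional ℝ X]
    [NormedAddCommGroup Y] [NormedSpace ℝ Y] [FiniteDimensional ℝ Y]
    (SX : Set X) (SY : Set Y)
    (hSXne : SX.Nonempty) (hSXcl : IsClosed SX) (hSXconv : Convex ℝ SX)
    (hSYne : SY.Nonempty) (hSYcl : IsClosed SY) (hSYconv : Convex ℝ SY)
    (φ : X → Y → ℝ)
    (hφconv : ∀ y ∈ SY, ConvexOn ℝ SX (fun x => φ x y))
    (hφconc : ∀ x ∈ SX, ConcaveOn ℝ SY (fun y => φ x y))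
    (φx' : X × Y → X →L[ℝ] ℝ) (φy' : X × Y → Y →L[ℝ] ℝ)
    (hφx' : ∀ z : X × Y, HasFDerivAt (fun x => φ x z.2) (φx' z) z.1)
    (hφy' : ∀ z : X × Y, HasFDerivAt (fun y => φ z.1 y) (φy' z) z.2)
    (F : X × Y → (X × Y) →L[ℝ] ℝ)
    (hF : ∀ z w : X × Y, F z w = φx' z w.1 - φy' z w.2)
    (ψ : X × Y → ℝ) (ψ' : X × Y → (X × Y) →L[ℝ] ℝ)
    (hψd : ∀ z, HasFDerivAt ψ (ψ' z) z)
    (hψsc : ∀ (v v' : X × Y) (l : ℝ), 0 ≤ l → l ≤ 1 →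
      ψ (l • v + (1 - l) • v') ≤
        l * ψ v + (1 - l) * ψ v' - 1 / 2 * l * (1 - l) * ‖v - v'‖ ^ 2)
    (D : X × Y → X × Y → ℝ) (hD : ∀ p z, D p z = ψ p - ψ z - ψ' z (p - z))
    (Ω : ℝ) (hΩ : ∀ z ∈ SX ×ˢ SY, ∀ z' ∈ SX ×ˢ SY, D z z' ≤ Ω)
    -- F is Lc-Lipschitz on 𝒵 (operator norm = dual norm)
    (Lc : ℝ) (hLc : 0 < Lc)
    (hFLip : ∀ z ∈ SX ×ˢ SY, ∀ z' ∈ SX ×ˢ SY, ‖F z - F z'‖ ≤ Lc * ‖z - z'‖)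
    -- constant stepsizes and polynomial weights
    (q : ℝ) (hq : 0 ≤ q)
    (τs : ℕ → ℝ) (hτs : ∀ t : ℕ, 1 ≤ t → τs t = 1 / Lc)
    (w : ℕ → ℝ) (hw : ∀ t : ℕ, 1 ≤ t → w t = (t : ℝ) ^ q)
    -- the Mirror Prox iterates
    (z : ℕ → X × Y) (ztil : ℕ → X × Y)
    (hz1 : z 1 ∈ SX ×ˢ SY)
    (hztil : ∀ t : ℕ, 1 ≤ t → ztil t ∈ SX ×ˢ SY ∧ ∀ p ∈ SX ×ˢ SY,
      τs t * F (z t) (ztil t) + D (ztil t) (z t) ≤ τs t * F (z t) p + D p (z t))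
    (hznext : ∀ t : ℕ, 1 ≤ t → z (t + 1) ∈ SX ×ˢ SY ∧ ∀ p ∈ SX ×ˢ SY,
      τs t * F (ztil t) (z (t + 1)) + D (z (t + 1)) (z t) ≤
        τs t * F (ztil t) p + D p (z t))
    (δ : ℕ → ℝ)
    (hδ : ∀ t : ℕ, 1 ≤ t →
      δ t = τs t * F (ztil t) (ztil t - z (t + 1)) - D (z (t + 1)) (z t)) :
    (∀ t : ℕ, 1 ≤ t → δ t ≤ 0) ∧
    (∀ T : ℕ, 1 ≤ T → ∀ x ∈ SX, ∀ y ∈ SY,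
      φ ((1 / ∑ t ∈ Finset.Icc 1 T, w t * τs t) •
            ∑ t ∈ Finset.Icc 1 T, (w t * τs t) • ztil t).1 y -
          φ x ((1 / ∑ t ∈ Finset.Icc 1 T, w t * τs t) •
            ∑ t ∈ Finset.Icc 1 T, (w t * τs t) • ztil t).2 ≤
        (q + 1) * Lc * Ω / (T : ℝ)) := by
  have hconv : Convex ℝ (SX ×ˢ SY) := hSXconv.prod hSYconv
  have hDlow : ∀ p c, 1 / 2 * ‖p - c‖ ^ 2 ≤ D p c := by
    intro p c
    have := aux_grad ψ (ψ' c) (1 / 2 * ‖p - c‖ ^ 2) c p (hψd c) (by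
      intro l h0 h1
      have := hψsc p c l h0 h1
      linarith)
    rw [hD]; linarith
  have hD0 : ∀ p c, 0 ≤ D p c := fun p c => le_trans (by positivity) (hDlow p c)
  have hΩ0 : 0 ≤ Ω := (hD0 _ _).trans (hΩ _ hz1 _ hz1)
  have hz : ∀ t : ℕ, 1 ≤ t → z t ∈ SX ×ˢ SY := by
    intro t ht
    obtain ⟨s, rfl⟩ := Nat.exists_eq_add_of_le' ht
    rcases Nat.eq_zero_or_pos s with rfl | hs
    · exact hz1
    · exact (hznext s hs).1
  have hδ0 : ∀ t : ℕ, 1 ≤ t → δ t ≤ 0 := by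
    intro t ht
    rw [hδ t ht]
    have h1 := aux_min_s8 _ hconv ψ ψ' hψd D hD (τs t) (F (z t)) _ _ (hztil t ht).1 (hztil t ht).2
      (z (t+1)) (hznext t ht).1
    have h2 := (F (ztil t) - F (z t)).le_opNorm (ztil t - z (t+1))
    have h3 := hFLip _ (hztil t ht).1 _ (hz t ht)
    have h4 := hDlow (z (t+1)) (ztil t)
    have h5 := hDlow (ztil t) (z t)
    have h6 : τs t * Lc = 1 := by rw [hτs t ht]; field_simp
    have hτ : 0 < τs t := by rw [hτs t ht]; positivity
    rw [norm_sub_rev] at h4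
    have h7 := le_trans (Real.le_norm_self _) (h2.trans
      (mul_le_mul_of_nonneg_right h3 (norm_nonneg (ztil t - z (t+1)))))
    rw [ContinuousLinearMap.sub_apply] at h7
    have h8 := mul_le_mul_of_nonneg_left h7 hτ.le
    have h9 : τs t * (Lc * ‖ztil t - z t‖ * ‖ztil t - z (t+1)‖)
      = ‖ztil t - z t‖ * ‖ztil t - z (t+1)‖ := by
      rw [← mul_assoc, ← mul_assoc, h6, one_mul]
    nlinarith [sq_nonneg (‖ztil t - z t‖ - ‖ztil t - z (t+1)‖)]
  refine ⟨hδ0, ?_⟩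
  intro T hT x hx y hy
  have hp : (x, y) ∈ SX ×ˢ SY := ⟨hx, hy⟩
  have hstep : ∀ t : ℕ, 1 ≤ t → τs t * F (ztil t) (ztil t - (x, y)) ≤
      D (x, y) (z t) - D (x, y) (z (t+1)) := by
    intro t ht
    have h1 := aux_min_s8 _ hconv ψ ψ' hψd D hD (τs t) (F (ztil t)) _ _ (hznext t ht).1
      (hznext t ht).2 (x, y) hp
    have h2 := hδ0 t ht
    rw [hδ t ht] at h2
    simp only [map_sub] at h1 h2 ⊢
    linarith
  have hgap : ∀ t : ℕ, 1 ≤ t → φ (ztil t).1 y - φ x (ztil t).2 ≤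
      F (ztil t) (ztil t - (x, y)) := by
    intro t ht
    have hm := (hztil t ht).1
    have h1 := aux_grad (fun x => φ x (ztil t).2) _ 0 _ x (hφx' (ztil t)) (by
      intro l h0 h1
      have := (hφconv _ hm.2).2 hx hm.1 h0 (sub_nonneg.2 h1) (by ring)
      simpa using this)
    have h2 := aux_grad (fun y => - φ (ztil t).1 y) _ 0 _ y (hφy' (ztil t)).neg (by
      intro l h0 h1
      have := (hφconc _ hm.1).2 hy hm.2 h0 (sub_nonneg.2 h1) (by ring)
      simp only [smul_eq_mul] at this
      linarith)
    rw [hF]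
    simp only [ContinuousLinearMap.neg_apply, map_sub, Prod.fst_sub, Prod.snd_sub] at h1 h2 ⊢
    linarith
  have hwpos : ∀ t : ℕ, 1 ≤ t → 0 < w t := by
    intro t ht
    rw [hw t ht]
    have : (0:ℝ) < t := by exact_mod_cast ht
    positivity
  have htel : ∀ n : ℕ, 1 ≤ n → ∑ t ∈ Finset.Icc 1 n,
      w t * (D (x, y) (z t) - D (x, y) (z (t+1))) ≤ w n * (Ω - D (x, y) (z (n+1))) := by
    intro n hn
    induction n, hn using Nat.le_induction with
    | base =>
      simp only [Finset.Icc_self, Finset.sum_singleton]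
      have := hΩ _ hp _ hz1
      have := hwpos 1 le_rfl
      gcongr
    | succ n hn ih =>
      rw [Finset.sum_Icc_succ_top (by omega)]
      have h1 := hΩ _ hp _ (hz (n+1) (by omega))
      have h2 : w n ≤ w (n+1) := by
        rw [hw n hn, hw (n+1) (by omega)]
        apply Real.rpow_le_rpow (by positivity) _ hq
        push_cast; linarith
      nlinarith
  have hτ : ∀ t ∈ Finset.Icc 1 T, 0 < w t * τs t := by
    intro t ht
    have ht := (Finset.mem_Icc.1 ht).1
    have := hwpos t ht
    rw [hτs t ht]; positivity
  have hSpos : 0 < ∑ t ∈ Finset.Icc 1 T, w t * τs t :=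
    Finset.sum_pos hτ ⟨1, by simp [hT]⟩
  have hSeq : ∑ t ∈ Finset.Icc 1 T, w t * τs t = (∑ t ∈ Finset.Icc 1 T, w t) / Lc := by
    rw [Finset.sum_div]
    refine Finset.sum_congr rfl fun t ht => ?_
    rw [hτs t (Finset.mem_Icc.1 ht).1]; ring
  have hJ1 := (hφconv y hy).map_centerMass_le (t := Finset.Icc 1 T) (w := fun t => w t * τs t)
    (p := fun t => (ztil t).1) (fun t ht => (hτ t ht).le) hSpos
    (fun t ht => (hztil t (Finset.mem_Icc.1 ht).1).1.1)
  have hJ2 := (hφconc x hx).le_map_centerMass (t := Finset.Icc 1 T) (w := fun t => w t * τs t)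
    (p := fun t => (ztil t).2) (fun t ht => (hτ t ht).le) hSpos
    (fun t ht => (hztil t (Finset.mem_Icc.1 ht).1).1.2)
  have hkey : ∑ t ∈ Finset.Icc 1 T, (w t * τs t) * (φ (ztil t).1 y - φ x (ztil t).2) ≤
      (T:ℝ) ^ q * Ω := by
    calc _ ≤ ∑ t ∈ Finset.Icc 1 T, w t * (D (x, y) (z t) - D (x, y) (z (t+1))) := by
          refine Finset.sum_le_sum fun t ht => ?_
          have h1 := mul_le_mul_of_nonneg_left (hgap t (Finset.mem_Icc.1 ht).1) (hτ t ht).le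
          have h2 := mul_le_mul_of_nonneg_left (hstep t (Finset.mem_Icc.1 ht).1)
            (hwpos t (Finset.mem_Icc.1 ht).1).le
          linarith
      _ ≤ _ := htel T hT
      _ ≤ w T * Ω := mul_le_mul_of_nonneg_left (by linarith [hD0 (x,y) (z (T+1))]) (hwpos T hT).le
      _ = _ := by rw [hw T hT]
  have hs := aux_sum q hq w hw T
  simp only [Finset.centerMass, smul_eq_mul, Function.comp_def] at hJ1 hJ2
  rw [one_div, Prod.smul_fst, Prod.smul_snd, Prod.fst_sum, Prod.snd_sum]
  simp only [Prod.smul_fst, Prod.smul_snd]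
  refine (sub_le_sub hJ1 hJ2).trans ?_
  rw [← mul_sub, ← Finset.sum_sub_distrib]
  simp only [← mul_sub]
  have hTp : (0:ℝ) < T := by exact_mod_cast hT
  rw [inv_mul_le_iff₀ hSpos]
  refine hkey.trans ?_
  rw [hSeq]
  have e : (∑ t ∈ Finset.Icc 1 T, w t) / Lc * ((q + 1) * Lc * Ω / (T:ℝ)) =
    ((q + 1) * ∑ t ∈ Finset.Icc 1 T, w t) * Ω / T := by field_simp
  rw [e, le_div_iff₀ hTp]
  nlinarith
end

section
/- (Polynomially growing weights have bounded tail ratio.) Let q ≥ 0 be a real number and let (w_t)_{t ≥ 1} be a sequence of positive real numbers such that w_{t+1}/w_t ≤ ((t+1)/t)^q for all t ≥ 1. Then for every integer T ≥ 1: w_T / (Σ_{t=1}^T w_t) ≤ (q + 1)/T. -/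
theorem stmt_9 (q : ℝ) (hq : 0 ≤ q) (w : ℕ → ℝ)
    (hwpos : ∀ t : ℕ, 1 ≤ t → 0 < w t)
    (hwratio : ∀ t : ℕ, 1 ≤ t → w (t + 1) / w t ≤ (((t : ℝ) + 1) / (t : ℝ)) ^ q) :
    ∀ T : ℕ, 1 ≤ T → w T / (∑ t ∈ Finset.Icc 1 T, w t) ≤ (q + 1) / (T : ℝ) := by
  have key : ∀ T : ℕ, 1 ≤ T → w T * (T : ℝ) ≤ (q + 1) * ∑ t ∈ Finset.Icc 1 T, w t := by
    intro T hT
    induction T, hT using Nat.le_induction with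
    | base =>
      have := hwpos 1 le_rfl
      simp
      nlinarith
    | succ T hT ih =>
      have hT0 : (0 : ℝ) < T := by exact_mod_cast hT
      have h1 := hwpos T hT
      have h2 := hwpos (T + 1) (by omega)
      have hS : 0 ≤ ∑ t ∈ Finset.Icc 1 T, w t :=
        Finset.sum_nonneg fun t ht => (hwpos t (Finset.mem_Icc.1 ht).1).le
      rw [Finset.sum_Icc_succ_top (by omega)]
      push_cast
      have h3 : ((T : ℝ) - q) * w (T + 1) ≤ T * w T := by
        have hr : w (T + 1) / w T ≤ Real.exp (q / T) := by
          refine (hwratio T hT).trans ?_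
          have ha : ((T : ℝ) + 1) / T ≤ Real.exp (1 / T) := by
            have := Real.add_one_le_exp (1 / (T : ℝ))
            have e : ((T : ℝ) + 1) / T = 1 / T + 1 := by field_simp; ring
            rw [e]; exact this
          refine (Real.rpow_le_rpow (by positivity) ha hq).trans (le_of_eq ?_)
          rw [← Real.exp_mul]
          congr 1
          ring
        rw [div_le_iff₀ h1] at hr
        have hb : ((T : ℝ) - q) ≤ T * Real.exp (-(q / T)) := by
          have := Real.add_one_le_exp (-(q / (T : ℝ)))
          have e : (T : ℝ) - q = T * (-(q / T) + 1) := by field_simp; ring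
          rw [e]
          exact mul_le_mul_of_nonneg_left this hT0.le
        calc ((T : ℝ) - q) * w (T + 1) ≤ (T * Real.exp (-(q / T))) * w (T + 1) :=
              mul_le_mul_of_nonneg_right hb h2.le
          _ ≤ (T * Real.exp (-(q / T))) * (Real.exp (q / T) * w T) :=
              mul_le_mul_of_nonneg_left hr (by positivity)
          _ = T * w T * (Real.exp (-(q / T)) * Real.exp (q / T)) := by ring
          _ = T * w T := by rw [← Real.exp_add]; simp
      nlinarith
  intro T hT
  have hT0 : (0 : ℝ) < T := by exact_mod_cast hT
  have hS : 0 < ∑ t ∈ Finset.Icc 1 T, w t :=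
    Finset.sum_pos (fun t ht => hwpos t (Finset.mem_Icc.1 ht).1) ⟨1, by simp [hT]⟩
  rw [div_le_div_iff₀ hS hT0]
  exact key T hT
end

section
/- (Weighted telescoping bound with relaxation parameters.) Let Ω ≥ 0, let A_0, A_1, …, A_T be real numbers with 0 ≤ A_t ≤ Ω for all 0 ≤ t ≤ T, let 0 < ρ_0 ≤ ρ_1 ≤ … ≤ ρ_{T−1} be positive reals, and let 0 = w_0 ≤ w_1 ≤ … ≤ w_T be nonnegative reals. Then Σ_{t=1}^T (w_t/ρ_{t−1})(A_{t−1} − A_t) ≤ Ω·w_T/ρ_0. -/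
theorem stmt_12 (T : ℕ) (hT : 1 ≤ T) (Ω : ℝ) (hΩ : 0 ≤ Ω)
    (A : ℕ → ℝ) (hA : ∀ t : ℕ, t ≤ T → 0 ≤ A t ∧ A t ≤ Ω)
    (ρ : ℕ → ℝ) (hρ0 : 0 < ρ 0)
    (hρmono : ∀ t : ℕ, t + 1 ≤ T - 1 → ρ t ≤ ρ (t + 1))
    (w : ℕ → ℝ) (hw0 : w 0 = 0)
    (hwmono : ∀ t : ℕ, t < T → w t ≤ w (t + 1)) :
    ∑ t ∈ Finset.Icc 1 T, w t / ρ (t - 1) * (A (t - 1) - A t) ≤ Ω * w T / ρ 0 := by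
  have hρ : ∀ t : ℕ, t ≤ T - 1 → ρ 0 ≤ ρ t := by
    intro t
    induction t with
    | zero => intro _; exact le_rfl
    | succ k ih => intro h; exact (ih (by omega)).trans (hρmono k h)
  have hw : ∀ t : ℕ, t ≤ T → 0 ≤ w t := by
    intro t
    induction t with
    | zero => intro _; exact hw0.ge
    | succ k ih => intro h; exact (ih (by omega)).trans (hwmono k h)
  have key : ∀ n : ℕ, n + 1 ≤ T →
      ∑ t ∈ Finset.Icc 1 (n + 1), w t / ρ (t - 1) * (A (t - 1) - A t)
        + w (n + 1) / ρ n * A (n + 1) ≤ Ω * (w (n + 1) / ρ 0) := by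
    intro n
    induction n with
    | zero =>
      intro h
      have h1 : 0 ≤ w 1 / ρ 0 := div_nonneg (hw 1 h) hρ0.le
      have h2 := mul_le_mul_of_nonneg_left (hA 0 (by omega)).2 h1
      simp
      linarith
    | succ k ih =>
      intro h
      have ih := ih (by omega)
      rw [Finset.sum_Icc_succ_top (by omega)]
      simp only [Nat.add_sub_cancel]
      obtain ⟨a0, a1⟩ := hA (k + 1) (by omega)
      have r0 := hρ k (by omega)
      have r1 := hρ (k + 1) (by omega)
      have r2 := hρmono k (by omega)
      have w0 := hw (k + 1) (by omega)
      have w1 := hwmono (k + 1) (by omega)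
      have e1 : w (k + 1) / ρ (k + 1) ≤ w (k + 1) / ρ k :=
        div_le_div_of_nonneg_left w0 (by linarith) r2
      have e2 : (w (k + 1 + 1) - w (k + 1)) / ρ (k + 1) ≤ (w (k + 1 + 1) - w (k + 1)) / ρ 0 :=
        div_le_div_of_nonneg_left (by linarith) hρ0 r1
      have e3 : 0 ≤ (w (k + 1 + 1) - w (k + 1)) / ρ 0 := div_nonneg (by linarith) hρ0.le
      rw [sub_div, sub_div] at e2
      rw [sub_div] at e3
      have f1 := mul_le_mul_of_nonneg_right (add_le_add e1 e2) a0
      have f2 := mul_le_mul_of_nonneg_left a1 e3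
      linarith
  obtain ⟨n, rfl⟩ : ∃ n, T = n + 1 := ⟨T - 1, by omega⟩
  have h := key n le_rfl
  have h1 : 0 ≤ w (n + 1) / ρ n * A (n + 1) :=
    mul_nonneg (div_nonneg (hw _ le_rfl) (hρ0.le.trans (hρ n (by omega)))) (hA _ le_rfl).1
  rw [mul_div_assoc]
  linarith
end
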